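/- Let N, M ≥ 1, let A be a real N×N doubly stochastic matrix with spectral expansion λ(A) ≤ α, and let B₁, B₂ be real M×M doubly stochastic matrices with spectral expansions λ(B₁) ≤ β₁ and λ(B₂) ≤ β₂, where α, β₁, β₂ ∈ [0,1]. Let Ã be an NM×NM permutation matrix satisfying P Ã P = A ⊗ ((1/M)J_M), where P = I_N ⊗ (1/M)J_M, and let Z = (I_N ⊗ B₂) Ã (I_N ⊗ B₁). Then for every x ∈ ℝ^{NM} orthogonal to the all-ones vector with ‖x^∥‖ ≥ α·‖x‖, one has ‖Zx‖² ≤ (α² + β₂² − α²β₂²)·‖x^∥‖² + (β₁² − α²β₁² + α²β₁²β₂²)·‖x^⊥‖² + 2αβ₁√(1−α²)·(1−β₂²)·‖x^∥‖·‖x^⊥‖. -/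

import Mathlib

/-!
Write `P` for the projection onto blockwise-constant vectors, `y = (I ⊗ B₁) x` and `w = P Ã y`.
Since `B₂` fixes constants and contracts their orthogonal complement by `β₂`,
`‖Zx‖² ≤ ‖w‖² + β₂² ‖Ãy - w‖² = (1 - β₂²) ‖w‖² + β₂² ‖y‖²`, and `‖y‖² ≤ ‖x^∥‖² + β₁² ‖x^⊥‖²`.
So everything reduces to `‖w‖ ≤ α ‖x^∥‖ + √(1 - α²) β₁ ‖x^⊥‖` (`norm_par_le`).

For this, pull `w` back: with `z = P Ãᵀ w` and `z' = Ãᵀ w - z` one has `‖z‖² + ‖z'‖² = ‖w‖²` and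
`‖w‖² = ⟨x^∥, z⟩ + ⟨y^⊥, z'⟩ ≤ ‖x^∥‖ ‖z‖ + β₁ ‖x^⊥‖ ‖z'‖`. Moreover
`‖z‖² = ⟨P Ã P z, w⟩ ≤ α ‖z‖ ‖w‖`, so `‖z‖ ≤ α ‖w‖`. If `θ` is the angle with
`‖z‖ = ‖w‖ cos θ`, then `cos θ ≤ α`, and `‖x^∥‖ ≥ α ‖x‖` together with `β₁ ≤ 1` ensures that
`‖x^∥‖ cos θ + β₁ ‖x^⊥‖ sin θ` increases with `cos θ` up to `cos θ = α` (`angle_bound`).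
-/

open Matrix Kronecker

/-- Euclidean norm of a real vector. -/
noncomputable def euclNorm {n : Type*} [Fintype n] (x : n → ℝ) : ℝ :=
  Real.sqrt (∑ i, x i ^ 2)

/-- A real square matrix is doubly stochastic if its entries are nonnegative and
each row sum and each column sum equals 1. -/
def IsDoublyStochastic {n : Type*} [Fintype n] (A : Matrix n n ℝ) : Prop :=
  (∀ i j, 0 ≤ A i j) ∧ (∀ i, ∑ j, A i j = 1) ∧ (∀ j, ∑ i, A i j = 1)

/-- A permutation matrix. -/
def IsPermMatrix {n : Type*} [DecidableEq n] (A : Matrix n n ℝ) : Prop :=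
  ∃ σ : Equiv.Perm n, ∀ p q, A p q = if p = σ q then 1 else 0

/-- The function f(α,β₁,β₂) bounding the spectral expansion of the generalized
zig-zag product. -/
noncomputable def fZZ (α β₁ β₂ : ℝ) : ℝ :=
  (1 / 2) * (Real.sqrt (α ^ 2 * (1 - β₁ ^ 2) * (1 - β₂ ^ 2) + (β₁ + β₂) ^ 2)
           + Real.sqrt (α ^ 2 * (1 - β₁ ^ 2) * (1 - β₂ ^ 2) + (β₁ - β₂) ^ 2))

/-- The M×M all-ones matrix J_M. -/
def onesMat (M : ℕ) : Matrix (Fin M) (Fin M) ℝ := Matrix.of fun _ _ => 1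

/-- P = I_N ⊗ (1/M)·J_M, the orthogonal projection onto blockwise-constant vectors. -/
noncomputable def projP (N M : ℕ) : Matrix (Fin N × Fin M) (Fin N × Fin M) ℝ :=
  (1 : Matrix (Fin N) (Fin N) ℝ) ⊗ₖ ((M : ℝ)⁻¹ • onesMat M)

/-- The blockwise-constant part x^∥ of a vector indexed by [N]×[M]. -/
noncomputable def blockPar {N M : ℕ} (x : Fin N × Fin M → ℝ) : Fin N × Fin M → ℝ :=
  fun p => (∑ j, x (p.1, j)) / M

/-- The part x^⊥ = x − x^∥ of a vector indexed by [N]×[M]. -/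
noncomputable def blockPerp {N M : ℕ} (x : Fin N × Fin M → ℝ) : Fin N × Fin M → ℝ :=
  x - blockPar x

theorem euclNorm_sq {n : Type*} [Fintype n] (v : n → ℝ) : euclNorm v ^ 2 = v ⬝ᵥ v := by
  unfold euclNorm
  rw [Real.sq_sqrt (Finset.sum_nonneg fun i _ => sq_nonneg _)]
  simp [dotProduct, sq]

theorem euclNorm_nonneg {n : Type*} [Fintype n] (v : n → ℝ) : 0 ≤ euclNorm v :=
  Real.sqrt_nonneg _

theorem dotProduct_le_euclNorm {n : Type*} [Fintype n] (v w : n → ℝ) :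
    v ⬝ᵥ w ≤ euclNorm v * euclNorm w :=
  Real.sum_mul_le_sqrt_mul_sqrt _ _ _

/-- Maximising `a cos θ + c sin θ` under the constraint `cos θ ≤ α`, where `t = W cos θ` and
`s = W sin θ`: the hypothesis `α² (a² + c²) ≤ a²` places the maximum at `cos θ = α`. -/
theorem angle_bound {α a c t s W : ℝ} (hα0 : 0 ≤ α) (hα1 : α ≤ 1) (ha : 0 ≤ a) (hc : 0 ≤ c)
    (ht : 0 ≤ t) (hs : 0 ≤ s) (hW : 0 ≤ W) (hts : t ^ 2 + s ^ 2 = W ^ 2) (htα : t ≤ α * W)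
    (hac : α ^ 2 * (a ^ 2 + c ^ 2) ≤ a ^ 2) (hWle : W ^ 2 ≤ a * t + c * s) :
    W ≤ α * a + √(1 - α ^ 2) * c := by
  set γ := √(1 - α ^ 2) with hγ
  have hγ0 : 0 ≤ γ := Real.sqrt_nonneg _
  have hγ2 : γ ^ 2 = 1 - α ^ 2 := Real.sq_sqrt (by nlinarith)
  have h1 : α * c ≤ γ * a := by
    refine le_of_sq_le_sq ?_ (by positivity)
    rw [mul_pow, mul_pow, hγ2]; nlinarith
  have h2 : γ * W ≤ s := by
    refine le_of_sq_le_sq ?_ hs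
    have : t ^ 2 ≤ (α * W) ^ 2 := pow_le_pow_left₀ ht htα 2
    rw [mul_pow, hγ2]; nlinarith
  have hγW : 0 ≤ γ * W := by positivity
  have h3 : c * (s - γ * W) ≤ a * (α * W - t) := by
    rcases (add_nonneg hs hγW).eq_or_lt with h0 | h0
    · have : s - γ * W = 0 := by linarith
      rw [this, mul_zero]
      exact mul_nonneg ha (by linarith)
    · have e : (α * W - t) * (α * W + t) = (s - γ * W) * (s + γ * W) := by
        linear_combination W ^ 2 * hγ2 - hts
      have h4 : c * (α * W + t) ≤ a * (s + γ * W) := by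
        have h5 : c * t ≤ c * (α * W) := mul_le_mul_of_nonneg_left htα hc
        have h6 : (α * c) * W ≤ (γ * a) * W := mul_le_mul_of_nonneg_right h1 hW
        have h7 : a * (γ * W) ≤ a * s := mul_le_mul_of_nonneg_left h2 ha
        linarith
      refine le_of_mul_le_mul_right ?_ h0
      have h8 := mul_le_mul_of_nonneg_left h4 (sub_nonneg.2 htα)
      calc c * (s - γ * W) * (s + γ * W) = (α * W - t) * (c * (α * W + t)) := by
            linear_combination -c * e
        _ ≤ _ := by linarith
  rcases hW.eq_or_lt with h0 | h0
  · rw [← h0]; positivity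
  · refine le_of_mul_le_mul_right ?_ h0
    nlinarith

/-- The block-constant part of `Ã (I ⊗ B₁) x`, in abstract form: `P` is a symmetric idempotent,
`T` is orthogonal, `K` preserves the splitting given by `P` and is a `β`-contraction on its kernel,
and `P T P` is an `α`-contraction on the sum-zero vectors in the range of `P`. -/
theorem norm_par_le {ι : Type*} [Fintype ι] [DecidableEq ι] {P T K : Matrix ι ι ℝ} {α β : ℝ}
    (hα0 : 0 ≤ α) (hα1 : α ≤ 1) (hβ0 : 0 ≤ β) (hβ1 : β ≤ 1)
    (hPt : Pᵀ = P) (hPP : P * P = P) (hT : T * Tᵀ = 1)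
    (hKP : K * P = P) (hPK : P * K = P)
    (hK : ∀ v, P *ᵥ v = 0 → euclNorm (K *ᵥ v) ≤ β * euclNorm v)
    (hP1 : 1 ᵥ* P = 1) (hT1 : 1 ᵥ* T = 1) (hT1' : 1 ᵥ* Tᵀ = 1)
    (hC : ∀ z, 1 ⬝ᵥ z = 0 → P *ᵥ z = z → euclNorm ((P * T * P) *ᵥ z) ≤ α * euclNorm z)
    (x : ι → ℝ) (hx : 1 ⬝ᵥ x = 0) (hpar : α * euclNorm x ≤ euclNorm (P *ᵥ x)) :
    euclNorm (P *ᵥ (T *ᵥ (K *ᵥ x))) ≤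
      α * euclNorm (P *ᵥ x) + √(1 - α ^ 2) * (β * euclNorm (x - P *ᵥ x)) := by
  have hPdot : ∀ v w, (P *ᵥ v) ⬝ᵥ w = v ⬝ᵥ (P *ᵥ w) := fun v w => by
    rw [dotProduct_mulVec, ← mulVec_transpose, hPt]
  have hTdot : ∀ v w, (T *ᵥ v) ⬝ᵥ w = v ⬝ᵥ (Tᵀ *ᵥ w) := fun v w => by
    rw [dotProduct_mulVec, vecMul_transpose]
  have hPPv : ∀ v, P *ᵥ (P *ᵥ v) = P *ᵥ v := fun v => by rw [mulVec_mulVec, hPP]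
  have h1P : ∀ v, 1 ⬝ᵥ (P *ᵥ v) = 1 ⬝ᵥ v := fun v => by rw [dotProduct_mulVec, hP1]
  have h1T : ∀ v, 1 ⬝ᵥ (T *ᵥ v) = 1 ⬝ᵥ v := fun v => by rw [dotProduct_mulVec, hT1]
  have h1T' : ∀ v, 1 ⬝ᵥ (Tᵀ *ᵥ v) = 1 ⬝ᵥ v := fun v => by rw [dotProduct_mulVec, hT1']
  have h1K : ∀ v, 1 ⬝ᵥ (K *ᵥ v) = 1 ⬝ᵥ v := fun v => by
    rw [← h1P, mulVec_mulVec, hPK, h1P]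
  have hpyth : ∀ v, euclNorm (P *ᵥ v) ^ 2 + euclNorm (v - P *ᵥ v) ^ 2 = euclNorm v ^ 2 := by
    intro v
    have := hPdot v (P *ᵥ v)
    rw [hPPv] at this
    simp only [euclNorm_sq, sub_dotProduct, dotProduct_sub]
    rw [dotProduct_comm (P *ᵥ v) v, this]; ring
  set q := x - P *ᵥ x with hq
  have hPq : P *ᵥ q = 0 := by rw [hq, mulVec_sub, hPPv, sub_self]
  have hKx : K *ᵥ x = P *ᵥ x + K *ᵥ q := by
    rw [hq, mulVec_sub, mulVec_mulVec, hKP]; abel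
  have hPKq : P *ᵥ (K *ᵥ q) = 0 := by rw [mulVec_mulVec, hPK, hPq]
  set w := P *ᵥ (T *ᵥ (K *ᵥ x)) with hw
  have hPw : P *ᵥ w = w := by rw [hw, hPPv]
  have hw1 : 1 ⬝ᵥ w = 0 := by rw [hw, h1P, h1T, h1K, hx]
  set z := P *ᵥ (Tᵀ *ᵥ w) with hz
  have hPz : P *ᵥ z = z := by rw [hz, hPPv]
  have hz1 : 1 ⬝ᵥ z = 0 := by rw [hz, h1P, h1T', hw1]
  set z' := Tᵀ *ᵥ w - z with hz'
  have hTw : euclNorm (Tᵀ *ᵥ w) ^ 2 = euclNorm w ^ 2 := by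
    rw [euclNorm_sq, euclNorm_sq, ← hTdot, mulVec_mulVec, hT, one_mulVec]
  have hts : euclNorm z ^ 2 + euclNorm z' ^ 2 = euclNorm w ^ 2 := by
    rw [← hTw, hz', hz]; exact hpyth _
  have htα : euclNorm z ≤ α * euclNorm w := by
    have h1 : euclNorm z ^ 2 = ((P * T * P) *ᵥ z) ⬝ᵥ w := by
      have e : z ⬝ᵥ (Tᵀ *ᵥ w) = z ⬝ᵥ z := by
        conv_lhs => rw [← hPz, hPdot]
      rw [← mulVec_mulVec, ← mulVec_mulVec, hPz, hPdot, hPw, hTdot, euclNorm_sq, e]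
    have h2 := dotProduct_le_euclNorm ((P * T * P) *ᵥ z) w
    have h3 := mul_le_mul_of_nonneg_right (hC z hz1 hPz) (euclNorm_nonneg w)
    rcases (euclNorm_nonneg z).eq_or_lt with h0 | h0
    · rw [← h0]; exact mul_nonneg hα0 (euclNorm_nonneg w)
    · refine le_of_mul_le_mul_right ?_ h0
      nlinarith
  have hWle : euclNorm w ^ 2 ≤
      euclNorm (P *ᵥ x) * euclNorm z + (β * euclNorm q) * euclNorm z' := by
    have h1 : euclNorm w ^ 2 = (P *ᵥ x) ⬝ᵥ z + (K *ᵥ q) ⬝ᵥ z' := by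
      have e1 : (P *ᵥ x) ⬝ᵥ z = (P *ᵥ x) ⬝ᵥ (Tᵀ *ᵥ w) := by
        rw [hz, ← hPdot, hPPv]
      have e2 : (K *ᵥ q) ⬝ᵥ z' = (K *ᵥ q) ⬝ᵥ (Tᵀ *ᵥ w) := by
        rw [hz', dotProduct_sub, hz, ← hPdot, hPKq, zero_dotProduct, sub_zero]
      have e3 : (T *ᵥ (K *ᵥ x)) ⬝ᵥ w = w ⬝ᵥ w := by
        conv_lhs => rw [← hPw, ← hPdot]
      rw [e1, e2, ← add_dotProduct, ← hKx, ← hTdot, euclNorm_sq, e3]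
    rw [h1]
    have h2 := dotProduct_le_euclNorm (K *ᵥ q) z'
    have h3 := mul_le_mul_of_nonneg_right (hK q hPq) (euclNorm_nonneg z')
    have h4 := dotProduct_le_euclNorm (P *ᵥ x) z
    linarith
  refine angle_bound hα0 hα1 (euclNorm_nonneg _) (mul_nonneg hβ0 (euclNorm_nonneg _))
    (euclNorm_nonneg z) (euclNorm_nonneg z') (euclNorm_nonneg w) hts htα ?_ hWle
  have h1 := pow_le_pow_left₀ (mul_nonneg hα0 (euclNorm_nonneg x)) hpar 2
  rw [mul_pow, ← hpyth x] at h1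
  refine le_trans (mul_le_mul_of_nonneg_left ?_ (sq_nonneg α)) h1
  have h2 : (β * euclNorm q) ^ 2 ≤ euclNorm q ^ 2 :=
    pow_le_pow_left₀ (mul_nonneg hβ0 (euclNorm_nonneg _))
      (mul_le_of_le_one_left (euclNorm_nonneg _) hβ1) 2
  linarith

theorem projP_mulVec {N M : ℕ} (x : Fin N × Fin M → ℝ) : projP N M *ᵥ x = blockPar x := by
  ext ⟨u, k⟩
  simp [projP, blockPar, onesMat, mulVec, dotProduct, Fintype.sum_prod_type, kroneckerMap_apply,
    one_apply, div_eq_inv_mul, Finset.mul_sum]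
  rw [Finset.sum_comm]
  simp

theorem one_kron_mulVec {N M : ℕ} (B : Matrix (Fin M) (Fin M) ℝ) (v : Fin N × Fin M → ℝ)
    (u : Fin N) (k : Fin M) :
    (((1 : Matrix (Fin N) (Fin N) ℝ) ⊗ₖ B) *ᵥ v) (u, k) = (B *ᵥ fun j => v (u, j)) k := by
  simp [mulVec, dotProduct, Fintype.sum_prod_type, kroneckerMap_apply, one_apply]

theorem euclNorm_sq_blocks {N M : ℕ} (v : Fin N × Fin M → ℝ) :
    euclNorm v ^ 2 = ∑ u, euclNorm (fun k => v (u, k)) ^ 2 := by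
  simp only [euclNorm_sq, dotProduct, Fintype.sum_prod_type]

/-- A contraction bound for `B` on sum-zero vectors carries over to `I ⊗ B` block by block. -/
theorem one_kron_contract {N M : ℕ} (hM : 1 ≤ M) {β : ℝ} (hβ : 0 ≤ β)
    (B : Matrix (Fin M) (Fin M) ℝ)
    (hB : ∀ v : Fin M → ℝ, ∑ k, v k = 0 → euclNorm (B *ᵥ v) ≤ β * euclNorm v)
    (v : Fin N × Fin M → ℝ) (hv : projP N M *ᵥ v = 0) :
    euclNorm (((1 : Matrix (Fin N) (Fin N) ℝ) ⊗ₖ B) *ᵥ v) ≤ β * euclNorm v := by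
  refine le_of_sq_le_sq ?_ (mul_nonneg hβ (euclNorm_nonneg _))
  rw [mul_pow, euclNorm_sq_blocks, euclNorm_sq_blocks v, Finset.mul_sum]
  refine Finset.sum_le_sum fun u _ => ?_
  rw [← mul_pow]
  simp only [one_kron_mulVec]
  refine pow_le_pow_left₀ (euclNorm_nonneg _) (hB _ ?_) 2
  have h := congrFun hv (u, ⟨0, hM⟩)
  rw [projP_mulVec] at h
  have hM' : (M : ℝ) ≠ 0 := by positivity
  simpa [blockPar, hM'] using h

theorem onesMat_mul_self {M : ℕ} (hM : 1 ≤ M) :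
    ((M : ℝ)⁻¹ • onesMat M) * ((M : ℝ)⁻¹ • onesMat M) = (M : ℝ)⁻¹ • onesMat M := by
  have hM' : (M : ℝ) ≠ 0 := by positivity
  ext i j
  simp [onesMat, mul_apply, hM']

theorem kron_mul_projP {N M : ℕ} (B : Matrix (Fin M) (Fin M) ℝ) (hB : IsDoublyStochastic B) :
    ((1 : Matrix (Fin N) (Fin N) ℝ) ⊗ₖ B) * projP N M = projP N M := by
  rw [projP, ← mul_kronecker_mul, one_mul]
  congr 1
  ext i j
  simp [onesMat, mul_apply, ← Finset.sum_mul, hB.2.1]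

theorem projP_mul_kron {N M : ℕ} (B : Matrix (Fin M) (Fin M) ℝ) (hB : IsDoublyStochastic B) :
    projP N M * ((1 : Matrix (Fin N) (Fin N) ℝ) ⊗ₖ B) = projP N M := by
  rw [projP, ← mul_kronecker_mul, one_mul]
  congr 1
  ext i j
  simp [onesMat, mul_apply, ← Finset.mul_sum, hB.2.2]

/-- On blockwise-constant vectors `A ⊗ (1/M) J` acts as `A` acts on the vector of block values, and
both sides scale by the same factor `M` in squared norm. -/
theorem kron_ones_contract {N M : ℕ} (hM : 1 ≤ M) {α : ℝ} (hα : 0 ≤ α)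
    (A : Matrix (Fin N) (Fin N) ℝ)
    (hA : ∀ v : Fin N → ℝ, ∑ i, v i = 0 → euclNorm (A *ᵥ v) ≤ α * euclNorm v)
    (z : Fin N × Fin M → ℝ) (hz : ∑ p, z p = 0) (hPz : projP N M *ᵥ z = z) :
    euclNorm ((A ⊗ₖ ((M : ℝ)⁻¹ • onesMat M)) *ᵥ z) ≤ α * euclNorm z := by
  have hM' : (M : ℝ) ≠ 0 := by positivity
  set f : Fin N → ℝ := fun u => (∑ j, z (u, j)) / M with hf
  have hzf : ∀ p, z p = f p.1 := fun p => by
    conv_lhs => rw [← hPz, projP_mulVec]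
    rfl
  have hAz : ∀ p, ((A ⊗ₖ ((M : ℝ)⁻¹ • onesMat M)) *ᵥ z) p = (A *ᵥ f) p.1 := by
    rintro ⟨u, k⟩
    simp only [mulVec, dotProduct, Fintype.sum_prod_type, kroneckerMap_apply, hzf]
    simp [onesMat]
    refine Finset.sum_congr rfl fun v _ => ?_
    field_simp
  have hf0 : ∑ u, f u = 0 := by
    rw [hf, ← Finset.sum_div, ← Fintype.sum_prod_type, hz, zero_div]
  have hnorm : ∀ (y : Fin N × Fin M → ℝ) (g : Fin N → ℝ), (∀ p, y p = g p.1) →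
      euclNorm y ^ 2 = M * euclNorm g ^ 2 := by
    intro y g h
    simp [euclNorm_sq, dotProduct, Fintype.sum_prod_type, h, Finset.mul_sum]
  refine le_of_sq_le_sq ?_ (mul_nonneg hα (euclNorm_nonneg _))
  rw [mul_pow, hnorm _ _ hAz, hnorm _ _ hzf]
  have h := pow_le_pow_left₀ (euclNorm_nonneg _) (hA f hf0) 2
  rw [mul_pow] at h
  nlinarith [mul_le_mul_of_nonneg_left h (Nat.cast_nonneg (α := ℝ) M)]

theorem zigzag_case1_norm_sq_bound
    (N M : ℕ) (hN : 1 ≤ N) (hM : 1 ≤ M) (α β₁ β₂ : ℝ)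
    (hα : α ∈ Set.Icc (0 : ℝ) 1) (hβ₁ : β₁ ∈ Set.Icc (0 : ℝ) 1) (hβ₂ : β₂ ∈ Set.Icc (0 : ℝ) 1)
    (A : Matrix (Fin N) (Fin N) ℝ) (hA : IsDoublyStochastic A)
    (hAα : ∀ v : Fin N → ℝ, ∑ i, v i = 0 → euclNorm (A.mulVec v) ≤ α * euclNorm v)
    (B₁ B₂ : Matrix (Fin M) (Fin M) ℝ)
    (hB₁ : IsDoublyStochastic B₁) (hB₂ : IsDoublyStochastic B₂)
    (hB₁β : ∀ v : Fin M → ℝ, ∑ k, v k = 0 → euclNorm (B₁.mulVec v) ≤ β₁ * euclNorm v)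
    (hB₂β : ∀ v : Fin M → ℝ, ∑ k, v k = 0 → euclNorm (B₂.mulVec v) ≤ β₂ * euclNorm v)
    (Atil : Matrix (Fin N × Fin M) (Fin N × Fin M) ℝ) (hperm : IsPermMatrix Atil)
    (hrot : projP N M * Atil * projP N M = A ⊗ₖ ((M : ℝ)⁻¹ • onesMat M))
    (x : Fin N × Fin M → ℝ) (hx : ∑ p, x p = 0)
    (hpar : α * euclNorm x ≤ euclNorm (blockPar x)) :
    euclNorm ((((1 : Matrix (Fin N) (Fin N) ℝ) ⊗ₖ B₂) * Atil
        * ((1 : Matrix (Fin N) (Fin N) ℝ) ⊗ₖ B₁)).mulVec x) ^ 2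
      ≤ (α ^ 2 + β₂ ^ 2 - α ^ 2 * β₂ ^ 2) * euclNorm (blockPar x) ^ 2
        + (β₁ ^ 2 - α ^ 2 * β₁ ^ 2 + α ^ 2 * β₁ ^ 2 * β₂ ^ 2) * euclNorm (blockPerp x) ^ 2
        + 2 * α * β₁ * Real.sqrt (1 - α ^ 2) * (1 - β₂ ^ 2)
          * euclNorm (blockPar x) * euclNorm (blockPerp x) := by
  obtain ⟨hα0, hα1⟩ := hα
  obtain ⟨hβ₁0, hβ₁1⟩ := hβ₁
  obtain ⟨hβ₂0, hβ₂1⟩ := hβ₂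
  obtain ⟨σ, hσ⟩ := hperm
  set P := projP N M with hP
  set K₁ := (1 : Matrix (Fin N) (Fin N) ℝ) ⊗ₖ B₁ with hK₁
  set K₂ := (1 : Matrix (Fin N) (Fin N) ℝ) ⊗ₖ B₂ with hK₂
  have hPt : Pᵀ = P := by
    ext ⟨u, k⟩ ⟨v, l⟩
    simp [hP, projP, onesMat, kroneckerMap_apply, one_apply, eq_comm]
  have hPP : P * P = P := by
    rw [hP, projP, ← mul_kronecker_mul, one_mul, onesMat_mul_self hM]
  have hTT : Atil * Atilᵀ = 1 := by
    ext p q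
    simp only [mul_apply, transpose_apply, hσ, one_apply]
    rw [Finset.sum_eq_single (σ.symm p)]
    · simp [eq_comm]
    · intro r _ hr
      rw [if_neg, zero_mul]
      rintro rfl
      simp at hr
    · simp
  have hTT' : Atilᵀ * Atil = 1 := mul_eq_one_comm.1 hTT
  have hT1 : 1 ᵥ* Atil = 1 := by
    ext q
    simp [vecMul, dotProduct, hσ]
  have hT1' : 1 ᵥ* Atilᵀ = 1 := by
    conv_lhs => rw [← hT1, vecMul_vecMul, hTT, vecMul_one]
  have hM' : (M : ℝ) ≠ 0 := by positivity
  have hP1 : 1 ᵥ* P = 1 := by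
    ext ⟨u, k⟩
    simp [vecMul, dotProduct, hP, projP, onesMat, Fintype.sum_prod_type, kroneckerMap_apply,
      one_apply]
    rw [Finset.sum_comm]
    simp [hM']
  have hPdot : ∀ v w, (P *ᵥ v) ⬝ᵥ w = v ⬝ᵥ (P *ᵥ w) := fun v w => by
    rw [dotProduct_mulVec, ← mulVec_transpose, hPt]
  have hPPv : ∀ v, P *ᵥ (P *ᵥ v) = P *ᵥ v := fun v => by rw [mulVec_mulVec, hPP]
  have hort : ∀ v w, P *ᵥ v = v → P *ᵥ w = 0 →
      euclNorm (v + w) ^ 2 = euclNorm v ^ 2 + euclNorm w ^ 2 := by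
    intro v w hv hw
    have h : v ⬝ᵥ w = 0 := by rw [← hv, hPdot, hw, dotProduct_zero]
    simp only [euclNorm_sq, add_dotProduct, dotProduct_add, dotProduct_comm w v, h]
    ring
  have hPperp : ∀ v, P *ᵥ (v - P *ᵥ v) = 0 := fun v => by rw [mulVec_sub, hPPv, sub_self]
  -- `I ⊗ B` respects the splitting into block-constant and block-sum-zero parts.
  have hsplit : ∀ (B : Matrix (Fin M) (Fin M) ℝ) (β : ℝ), 0 ≤ β → IsDoublyStochastic B →
      (∀ v : Fin M → ℝ, ∑ k, v k = 0 → euclNorm (B *ᵥ v) ≤ β * euclNorm v) →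
      ∀ v, euclNorm (((1 : Matrix (Fin N) (Fin N) ℝ) ⊗ₖ B) *ᵥ v) ^ 2 ≤
        euclNorm (P *ᵥ v) ^ 2 + β ^ 2 * euclNorm (v - P *ᵥ v) ^ 2 := by
    intro B β hβ hB hBβ v
    have e : ((1 : Matrix (Fin N) (Fin N) ℝ) ⊗ₖ B) *ᵥ v =
        P *ᵥ v + ((1 : Matrix (Fin N) (Fin N) ℝ) ⊗ₖ B) *ᵥ (v - P *ᵥ v) := by
      rw [mulVec_sub, mulVec_mulVec, hP, kron_mul_projP B hB]; abel
    rw [e, hort _ _ (hPPv v) (by rw [mulVec_mulVec, hP, projP_mul_kron B hB]; exact hPperp v),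
      ← mul_pow]
    gcongr
    · exact euclNorm_nonneg _
    · exact one_kron_contract hM hβ B hBβ _ (hPperp v)
  have hbx : blockPar x = P *ᵥ x := (projP_mulVec x).symm
  rw [blockPerp, hbx]
  rw [hbx] at hpar
  have hmain := norm_par_le hα0 hα1 hβ₁0 hβ₁1 hPt hPP hTT (kron_mul_projP B₁ hB₁)
    (projP_mul_kron B₁ hB₁) (one_kron_contract hM hβ₁0 B₁ hB₁β) hP1 hT1 hT1'
    (fun z hz hPz => by
      rw [hrot]
      exact kron_ones_contract hM hα0 A hAα z (by simpa [dotProduct] using hz) hPz)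
    x (by simpa [dotProduct] using hx) hpar
  rw [← mulVec_mulVec, ← mulVec_mulVec]
  have h2 := hsplit B₂ β₂ hβ₂0 hB₂ hB₂β (Atil *ᵥ (K₁ *ᵥ x))
  have h1 := hsplit B₁ β₁ hβ₁0 hB₁ hB₁β x
  rw [← hK₁] at h1 hmain
  rw [← hK₂] at h2
  set w := Atil *ᵥ (K₁ *ᵥ x) with hw
  have hwn : euclNorm w ^ 2 = euclNorm (K₁ *ᵥ x) ^ 2 := by
    rw [euclNorm_sq, euclNorm_sq, hw, dotProduct_mulVec, ← mulVec_transpose, mulVec_mulVec, hTT',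
      one_mulVec]
  have hwp : euclNorm (P *ᵥ w) ^ 2 + euclNorm (w - P *ᵥ w) ^ 2 = euclNorm w ^ 2 := by
    rw [← hort _ _ (hPPv w) (hPperp w)]; congr 2; abel
  have h3 := pow_le_pow_left₀ (euclNorm_nonneg _) hmain 2
  have hγ2 : √(1 - α ^ 2) ^ 2 = 1 - α ^ 2 := Real.sq_sqrt (by nlinarith)
  set a := euclNorm (P *ᵥ x)
  set b := euclNorm (x - P *ᵥ x)
  set γ := √(1 - α ^ 2)
  have h4 : (α * a + γ * (β₁ * b)) ^ 2 =
      α ^ 2 * a ^ 2 + (1 - α ^ 2) * β₁ ^ 2 * b ^ 2 + 2 * α * β₁ * γ * a * b := by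
    rw [← hγ2]; ring
  rw [h4] at h3
  have hβ₂s : 0 ≤ 1 - β₂ ^ 2 := by nlinarith
  have h5 := mul_le_mul_of_nonneg_left h3 hβ₂s
  have h6 := mul_le_mul_of_nonneg_left h1 (sq_nonneg β₂)
  rw [← hwn, ← hwp] at h6
  linarith
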